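/- For every integer m ≥ 3 there exist a two-party Bell scenario with finite input sets X, Y and output sets A = B of size m, a distinguished quadruple (a*, b*, x*, y*), and a finite set S_0 of quadruples not containing (a*, b*, x*, y*), such that: (i) every local box vanishing on S_0 satisfies P(a*,b*|x*,y*) = 0; (ii) there exist orthonormal bases {u_{x,a}}_{a∈A} of ℂ^m for each x ∈ X and {v_{y,b}}_{b∈B} of ℂ^m for each y ∈ Y such that the quantum box P(a,b|x,y) = |⟨u_{x,a} ⊗ v_{y,b}, ψ⟩|², with ψ = (1/√m)·Σ_{i=0}^{m−1} |i⟩⊗|i⟩ the maximally entangled state in ℂ^m ⊗ ℂ^m, vanishes on S_0 and has P(a*,b*|x*,y*) = 1/m; and (iii) there exists a no-signaling box vanishing on S_0 with P(a*,b*|x*,y*) = 1. -/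

import Mathlib

/-- A two-party box: nonnegative entries, normalized for every input pair. -/
def IsBox {A B X Y : Type*} [Fintype A] [Fintype B]
    (P : A → B → X → Y → ℝ) : Prop :=
  (∀ a b x y, 0 ≤ P a b x y) ∧ ∀ x y, (∑ a, ∑ b, P a b x y) = 1

/-- The no-signaling conditions: each party's marginal is independent of the
other party's input. -/
def NoSignaling {A B X Y : Type*} [Fintype A] [Fintype B]
    (P : A → B → X → Y → ℝ) : Prop :=
  (∀ a x y y', (∑ b, P a b x y) = ∑ b, P a b x y') ∧
  (∀ b y x x', (∑ a, P a b x y) = ∑ a, P a b x' y)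

/-- A box is local (classical) if it is a finite convex combination of
deterministic boxes. -/
def IsLocal {A B X Y : Type*} [Fintype A] [Fintype B] [DecidableEq A] [DecidableEq B]
    (P : A → B → X → Y → ℝ) : Prop :=
  ∃ (Λ : Type) (s : Finset Λ) (q : Λ → ℝ) (f : Λ → X → A) (g : Λ → Y → B),
    (∀ l ∈ s, 0 ≤ q l) ∧ (∑ l ∈ s, q l = 1) ∧
    ∀ a b x y, P a b x y =
      ∑ l ∈ s, q l * (if a = f l x then 1 else 0) * (if b = g l y then 1 else 0)

/-- A box vanishes on a set of (output, output, input, input) quadruples. -/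
def VanishesOn {A B X Y : Type*} (P : A → B → X → Y → ℝ)
    (S0 : Finset (A × B × X × Y)) : Prop :=
  ∀ t ∈ S0, P t.1 t.2.1 t.2.2.1 t.2.2.2 = 0

noncomputable section

/-- The tensor product of two vectors of `ℂ^m`, realized in `ℂ^m ⊗ ℂ^m ≅ ℂ^{m²}`. -/
def tens {m : ℕ} (v w : EuclideanSpace ℂ (Fin m)) :
    EuclideanSpace ℂ (Fin m × Fin m) :=
  WithLp.toLp 2 fun p => v p.1 * w p.2

/-- The maximally entangled state `(1/√m)·Σ_i |i⟩⊗|i⟩` in `ℂ^m ⊗ ℂ^m`. -/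
def maxEnt (m : ℕ) : EuclideanSpace ℂ (Fin m × Fin m) :=
  WithLp.toLp 2 fun p => if p.1 = p.2 then (((Real.sqrt m)⁻¹ : ℝ) : ℂ) else 0

/-- The twelve integer bases. -/
def ksV : Fin 12 → Fin 3 → Fin 3 → ℤ :=
  ![ ![![1, 0, 0], ![0, 1, 0], ![0, 0, 1]],
     ![![1, -1, 0], ![1, 1, -2], ![1, 1, 1]],
     ![![0, 1, 0], ![1, 0, -2], ![2, 0, 1]],
     ![![0, 1, 0], ![1, 0, -1], ![1, 0, 1]],
     ![![1, -1, -2], ![1, -1, 1], ![1, 1, 0]],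
     ![![0, 1, 1], ![1, 1, -1], ![2, -1, 1]],
     ![![0, 1, -1], ![1, -1, -1], ![2, 1, 1]],
     ![![0, 1, -1], ![0, 1, 1], ![1, 0, 0]],
     ![![0, 1, -2], ![0, 2, 1], ![1, 0, 0]],
     ![![1, -2, -1], ![1, 0, 1], ![1, 1, -1]],
     ![![1, -2, -2], ![2, -1, 2], ![2, 2, -1]],
     ![![0, 1, 2], ![0, 2, -1], ![1, 0, 0]]]

/-- Twice the single-party weights of the no-signaling box. -/
def ksW : Fin 12 → Fin 3 → ℕ :=
  ![![0, 0, 2], ![0, 1, 1], ![0, 1, 1], ![0, 1, 1], ![1, 1, 0], ![1, 1, 0],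
    ![1, 0, 1], ![1, 1, 0], ![1, 1, 0], ![0, 1, 1], ![0, 1, 1], ![1, 1, 0]]

/-- Integer inner product. -/
def ksD (x : Fin 12) (a : Fin 3) (y : Fin 12) (b : Fin 3) : ℤ :=
  ksV x a 0 * ksV y b 0 + ksV x a 1 * ksV y b 1 + ksV x a 2 * ksV y b 2

/-- Whether `a`, `b` have the same rank among the supports. -/
def ksMono (a b : Fin 3) (x y : Fin 12) : Bool :=
  decide ((∃ a', a' < a ∧ ksW x a' = 1) ↔ (∃ b', b' < b ∧ ksW y b' = 1))

/-- Whether the monotone matching avoids orthogonal pairs. -/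
def ksMonoOK (x y : Fin 12) : Bool :=
  decide (∀ a b, ksW x a = 1 → ksW y b = 1 → ksMono a b x y = true → ksD x a y b ≠ 0)

/-- Twice the core of the no-signaling box. -/
def ksN (a b : Fin 3) (x y : Fin 12) : ℕ :=
  if ksW x a = 0 then 0 else if ksW y b = 0 then 0
  else if ksW x a = 2 then ksW y b else if ksW y b = 2 then ksW x a
  else if ksMono a b x y = ksMonoOK x y then 1 else 0

set_option maxRecDepth 100000

theorem ksN_row : ∀ a x y, ksN a 0 x y + ksN a 1 x y + ksN a 2 x y = ksW x a := by
  decide +kernel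
theorem ksN_col : ∀ b x y, ksN 0 b x y + ksN 1 b x y + ksN 2 b x y = ksW y b := by
  decide +kernel
theorem ksN_zero : ∀ a b x y, ksD x a y b = 0 → ksN a b x y = 0 := by
  decide +kernel
theorem ksW_sum : ∀ x, ksW x 0 + ksW x 1 + ksW x 2 = 2 := by
  decide +kernel
theorem ksD_self : ∀ x a, 0 < ksD x a x a := by
  decide +kernel
theorem ksD_orth : ∀ x a b, a ≠ b → ksD x a x b = 0 := by
  decide +kernel

/-- Backtracking search for a consistent choice. -/
def ksBt : List (Fin 12) → List (Fin 12 × Fin 3) → Bool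
  | [], _ => true
  | x :: xs, acc => [(0 : Fin 3), 1, 2].any fun a =>
      (acc.all fun p => decide (ksD p.1 p.2 x a ≠ 0)) && ksBt xs ((x, a) :: acc)

theorem ksBt_true (f : Fin 12 → Fin 3) (hf : ∀ x y, ksD x (f x) y (f y) ≠ 0) :
    ∀ (xs : List (Fin 12)) (acc : List (Fin 12 × Fin 3)),
      (∀ p ∈ acc, p.2 = f p.1) → ksBt xs acc = true := by
  intro xs
  induction xs with
  | nil => intro acc _; rfl
  | cons x xs ih =>
    intro acc hacc
    simp only [ksBt, List.any_eq_true]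
    refine ⟨f x, ?_, ?_⟩
    · have : ∀ c : Fin 3, c ∈ [(0 : Fin 3), 1, 2] := by decide
      exact this _
    · rw [Bool.and_eq_true, List.all_eq_true]
      refine ⟨?_, ih _ ?_⟩
      · intro p hp
        rw [decide_eq_true_iff, hacc p hp]
        exact hf _ _
      · intro p hp
        rcases List.mem_cons.1 hp with rfl | hp
        · rfl
        · exact hacc p hp

theorem ksBt_false : ksBt [1, 2, 3, 4, 5, 6, 7, 8, 9, 10, 11] [(0, 2)] = false := by
  decide +kernel

theorem ks_no (f : Fin 12 → Fin 3) (h0 : f 0 = 2)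
    (hf : ∀ x y, ksD x (f x) y (f y) ≠ 0) : False := by
  have h := ksBt_true f hf [1, 2, 3, 4, 5, 6, 7, 8, 9, 10, 11] [(0, 2)] (by simp [h0])
  rw [ksBt_false] at h
  exact absurd h (by decide)

/-- Norms. -/
def ksR (x : Fin 12) (a : Fin 3) : ℝ := (Real.sqrt (ksD x a x a : ℝ))⁻¹

theorem ksR_sq (x : Fin 12) (a : Fin 3) : ksR x a * ksR x a * (ksD x a x a : ℝ) = 1 := by
  have h : (0 : ℝ) < (ksD x a x a : ℝ) := by exact_mod_cast ksD_self x a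
  rw [ksR, ← mul_inv, Real.mul_self_sqrt h.le]
  exact inv_mul_cancel₀ h.ne'

/-- The real orthogonal matrices in dimension `3 + k`. -/
def ksU (k : ℕ) (x : Fin 12) (a i : Fin (3 + k)) : ℝ :=
  Fin.addCases (motive := fun _ => ℝ)
    (fun a' => Fin.addCases (motive := fun _ => ℝ)
      (fun i' => ksR x a' * (ksV x a' i' : ℝ)) (fun _ => 0) i)
    (fun a' => Fin.addCases (motive := fun _ => ℝ)
      (fun _ => 0) (fun i' => if a' = i' then 1 else 0) i) a

/-- Gram matrix. -/
def ksG (k : ℕ) (x : Fin 12) (a : Fin (3 + k)) (y : Fin 12) (b : Fin (3 + k)) : ℝ :=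
  ∑ i, ksU k x a i * ksU k y b i

theorem ksG_ll (k x a y b) : ksG k x (Fin.castAdd k a) y (Fin.castAdd k b) =
    ksR x a * ksR y b * (ksD x a y b : ℝ) := by
  simp [ksG, ksU, Fin.sum_univ_add, Fin.sum_univ_three, ksD]
  ring

theorem ksG_lr (k x a y b) : ksG k x (Fin.castAdd k a) y (Fin.natAdd 3 b) = 0 := by
  simp [ksG, ksU, Fin.sum_univ_add]

theorem ksG_rl (k x a y b) : ksG k x (Fin.natAdd 3 a) y (Fin.castAdd k b) = 0 := by
  simp [ksG, ksU, Fin.sum_univ_add]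

theorem ksG_rr (k x a y b) : ksG k x (Fin.natAdd 3 a) y (Fin.natAdd 3 b) =
    if a = b then 1 else 0 := by
  simp [ksG, ksU, Fin.sum_univ_add, eq_comm]

theorem ksG_self (k x a b) : ksG k x a x b = if a = b then 1 else 0 := by
  induction a using Fin.addCases with
  | left a =>
    induction b using Fin.addCases with
    | left b =>
      rw [ksG_ll]
      by_cases h : a = b
      · subst h; simp [ksR_sq]
      · simp [h, ksD_orth x a b h]
    | right b =>
      rw [ksG_lr, if_neg]
      intro h
      have := congrArg Fin.val h
      simp at this
      omega
  | right a =>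
    induction b using Fin.addCases with
    | left b =>
      rw [ksG_rl, if_neg]
      intro h
      have := congrArg Fin.val h
      simp at this
      omega
    | right b =>
      rw [ksG_rr]
      by_cases h : a = b
      · simp [h]
      · simp [h]

/-- The measurement bases. -/
def ksu (k : ℕ) (x : Fin 12) (a : Fin (3 + k)) : EuclideanSpace ℂ (Fin (3 + k)) :=
  WithLp.toLp 2 fun i => ((ksU k x a i : ℝ) : ℂ)

theorem ksu_inner (k x a y b) : inner ℂ (ksu k x a) (ksu k y b) = ((ksG k x a y b : ℝ) : ℂ) := by
  simp [ksu, ksG, PiLp.inner_apply, mul_comm]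

theorem ksu_orthonormal (k x) : Orthonormal ℂ (ksu k x) := by
  rw [orthonormal_iff_ite]
  intro a b
  rw [ksu_inner, ksG_self]
  split_ifs <;> simp

theorem ksu_maxEnt (k x a y b) :
    inner ℂ (tens (ksu k x a) (ksu k y b)) (maxEnt (3 + k)) =
      (((Real.sqrt ((3 + k : ℕ) : ℝ))⁻¹ * ksG k x a y b : ℝ) : ℂ) := by
  simp only [tens, maxEnt, ksu, ksG, PiLp.inner_apply, Fintype.sum_prod_type]
  simp [Finset.mul_sum]

/-- The zero constraints. -/
def ksBad (k : ℕ) (a b : Fin (3 + k)) (x y : Fin 12) : Bool :=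
  Fin.addCases (motive := fun _ => Bool)
    (fun a' => Fin.addCases (motive := fun _ => Bool)
      (fun b' => decide (ksD x a' y b' = 0)) (fun _ => true) b)
    (fun _ => Fin.addCases (motive := fun _ => Bool)
      (fun _ => true) (fun _ => false) b) a

theorem ksG_bad (k a b x y) (h : ksBad k a b x y = true) : ksG k x a y b = 0 := by
  induction a using Fin.addCases with
  | left a =>
    induction b using Fin.addCases with
    | left b =>
      have h : ksD x a y b = 0 := by simpa [ksBad] using h
      simp [ksG_ll, h]
    | right b => exact ksG_lr ..
  | right a =>
    induction b using Fin.addCases with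
    | left b => exact ksG_rl ..
    | right b => simp [ksBad] at h

/-- The no-signaling box. -/
def ksP (k : ℕ) (a b : Fin (3 + k)) (x y : Fin 12) : ℝ :=
  Fin.addCases (motive := fun _ => ℝ)
    (fun a' => Fin.addCases (motive := fun _ => ℝ)
      (fun b' => (ksN a' b' x y : ℝ) / 2) (fun _ => 0) b)
    (fun _ => 0) a

theorem ksP_bad (k a b x y) (h : ksBad k a b x y = true) : ksP k a b x y = 0 := by
  induction a using Fin.addCases with
  | left a =>
    induction b using Fin.addCases with
    | left b =>
      have h : ksD x a y b = 0 := by simpa [ksBad] using h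
      simp [ksP, ksN_zero a b x y h]
    | right b => simp [ksP]
  | right a => simp [ksP]

theorem ksP_row (k a x y) : ∑ b, ksP k a b x y =
    Fin.addCases (motive := fun _ => ℝ) (fun a' => (ksW x a' : ℝ) / 2) (fun _ => 0) a := by
  induction a using Fin.addCases with
  | left a =>
    have h : ((ksN a 0 x y : ℝ) + ksN a 1 x y + ksN a 2 x y) = ksW x a := by
      exact_mod_cast ksN_row a x y
    simp [ksP, Fin.sum_univ_add, Fin.sum_univ_three, ← h]
    ring
  | right a => simp [ksP]

theorem ksP_col (k b x y) : ∑ a, ksP k a b x y =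
    Fin.addCases (motive := fun _ => ℝ) (fun b' => (ksW y b' : ℝ) / 2) (fun _ => 0) b := by
  induction b using Fin.addCases with
  | left b =>
    have h : ((ksN 0 b x y : ℝ) + ksN 1 b x y + ksN 2 b x y) = ksW y b := by
      exact_mod_cast ksN_col b x y
    simp [ksP, Fin.sum_univ_add, Fin.sum_univ_three, ← h]
    ring
  | right b => simp [ksP, Fin.sum_univ_add]

theorem ksP_box (k) : IsBox (ksP k) := by
  constructor
  · intro a b x y
    induction a using Fin.addCases with
    | left a =>
      induction b using Fin.addCases with
      | left b => simp only [ksP, Fin.addCases_left]; positivity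
      | right b => simp [ksP]
    | right a => simp [ksP]
  · intro x y
    have h : ((ksW x 0 : ℝ) + ksW x 1 + ksW x 2) = 2 := by exact_mod_cast ksW_sum x
    simp only [ksP_row]
    simp [Fin.sum_univ_add, Fin.sum_univ_three]
    linarith

theorem ksBad_local (k : ℕ) (f g : Fin 12 → Fin (3 + k))
    (h0 : f 0 = Fin.castAdd k 2)
    (h : ∀ x y, ksBad k (f x) (g y) x y = false) : False := by
  have hg : ∀ y, ∃ b, g y = Fin.castAdd k b := by
    intro y
    have h1 := h 0 y
    rw [h0] at h1
    generalize g y = c at h1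
    induction c using Fin.addCases with
    | left b => exact ⟨b, rfl⟩
    | right b => simp [ksBad] at h1
  choose g' hg' using hg
  have hf : ∀ x, ∃ a, f x = Fin.castAdd k a := by
    intro x
    have h1 := h x 0
    rw [hg'] at h1
    generalize f x = c at h1
    induction c using Fin.addCases with
    | left b => exact ⟨b, rfl⟩
    | right b => simp [ksBad] at h1
  choose f' hf' using hf
  have hD : ∀ x y, ksD x (f' x) y (g' y) ≠ 0 := by
    intro x y
    have h1 := h x y
    rw [hf', hg'] at h1
    simpa [ksBad] using h1
  have hfg : ∀ x, f' x = g' x := by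
    intro x
    by_contra hne
    exact hD x x (ksD_orth x _ _ hne)
  apply ks_no f'
  · rw [hf'] at h0
    exact Fin.castAdd_injective _ _ h0
  · intro x y
    have := hD x y
    rwa [← hfg] at this

/-- For every `m ≥ 3` there is a Hardy paradox with `m` outputs per party whose
quantum value on the maximally entangled state is `1/m` but whose no-signaling
value is `1`. -/
theorem hardy_paradox_no_randomness_beyond_2xn :
    ∀ m : ℕ, 3 ≤ m →
      ∃ (nx ny : ℕ) (astar bstar : Fin m) (xstar : Fin nx) (ystar : Fin ny)
        (S0 : Finset (Fin m × Fin m × Fin nx × Fin ny))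
        (u : Fin nx → Fin m → EuclideanSpace ℂ (Fin m))
        (v : Fin ny → Fin m → EuclideanSpace ℂ (Fin m)),
        (astar, bstar, xstar, ystar) ∉ S0 ∧
        (∀ x, Orthonormal ℂ (u x)) ∧
        (∀ y, Orthonormal ℂ (v y)) ∧
        (∀ Q : Fin m → Fin m → Fin nx → Fin ny → ℝ,
          IsBox Q → IsLocal Q → VanishesOn Q S0 → Q astar bstar xstar ystar = 0) ∧
        (VanishesOn
            (fun a b x y => ‖(inner ℂ (tens (u x a) (v y b)) (maxEnt m) : ℂ)‖ ^ 2)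
            S0 ∧
          ‖(inner ℂ (tens (u xstar astar) (v ystar bstar)) (maxEnt m) : ℂ)‖ ^ 2 =
            1 / (m : ℝ)) ∧
        (∃ Pns : Fin m → Fin m → Fin nx → Fin ny → ℝ,
          IsBox Pns ∧ NoSignaling Pns ∧ VanishesOn Pns S0 ∧
          Pns astar bstar xstar ystar = 1) := by
  intro m hm
  obtain ⟨k, rfl⟩ := Nat.exists_eq_add_of_le hm
  refine ⟨12, 12, Fin.castAdd k 2, Fin.castAdd k 2, 0, 0,
    Finset.univ.filter (fun t => ksBad k t.1 t.2.1 t.2.2.1 t.2.2.2 = true),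
    ksu k, ksu k, ?_, ksu_orthonormal k, ksu_orthonormal k, ?_, ⟨?_, ?_⟩,
    ksP k, ksP_box k, ⟨?_, ?_⟩, ?_, ?_⟩
  · have : ¬ ksD 0 2 0 2 = 0 := by decide
    intro h
    have h := (Finset.mem_filter.1 h).2
    simp [ksBad, this] at h
  · rintro Q - ⟨Λ, s, q, f, g, hq, -, hQ⟩ hS
    rw [hQ]
    refine Finset.sum_eq_zero fun l hl => ?_
    by_contra hne
    have hf0 : f l 0 = Fin.castAdd k 2 := by
      by_contra h
      exact hne (by simp [Ne.symm h])
    have hql : q l ≠ 0 := by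
      intro h
      exact hne (by simp [h])
    refine ksBad_local k (f l) (g l) hf0 fun x y => ?_
    by_contra hb
    have hz := hS (f l x, g l y, x, y) (by simpa using hb)
    simp only [hQ] at hz
    rw [Finset.sum_eq_zero_iff_of_nonneg] at hz
    · have := hz l hl
      simp at this
      exact hql this
    · intro i hi
      have := hq i hi
      split_ifs <;> simp [this]
  · intro t ht
    have hb := (Finset.mem_filter.1 ht).2
    simp only [ksu_maxEnt, ksG_bad k _ _ _ _ hb]
    simp
  · rw [ksu_maxEnt, ksG_self, Complex.norm_real]
    simp only [if_true, mul_one, norm_inv, Real.norm_eq_abs, inv_pow, sq_abs, one_div]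
    rw [Real.sq_sqrt (by positivity)]
  · intro a x y y'
    rw [ksP_row, ksP_row]
  · intro b y x x'
    rw [ksP_col, ksP_col]
  · intro t ht
    exact ksP_bad k _ _ _ _ (Finset.mem_filter.1 ht).2
  · have : ksN 2 2 0 0 = 2 := by decide +kernel
    simp [ksP, this]

end
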